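/- With Δ² := v(τ1)/τ1, one has Δ² = α²·τ/(τ1·(2q+1)), and the integral identity (2ν²/v(τ1)²)·∫_0^{τ1}(v(τ1) − v(s)) ds = (ν²/Δ²)·(τ² + 2qτ0² + τ1²)/(2τ1·τ·(q+1)) holds, where τ = 2qτ0 + τ1; equivalently this quantity equals ν²·(2q+1)·(τ² + 2qτ0² + τ1²)/(2α²·τ²·(q+1)). -/

import Mathlib

open MeasureTheory Real

theorem IntervalIntegrable.congr_uIcc {f g : ℝ → ℝ} {a b : ℝ}
    (hf : IntervalIntegrable f volume a b) (h : Set.EqOn f g (Set.uIcc a b)) :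
    IntervalIntegrable g volume a b :=
  (intervalIntegrable_congr (h.mono Set.uIoc_subset_uIcc)).mp hf

/-- The antiderivative of a power of the affine decay factor `(b - t) / L`. -/
theorem integral_sub_div_rpow (a b L p : ℝ) (hL : L ≠ 0) (hp : 0 < p) :
    ∫ t in a..b, ((b - t) / L) ^ p = L / (p + 1) * ((b - a) / L) ^ (p + 1) := by
  simp only [sub_div]
  rw [intervalIntegral.integral_comp_sub_div (fun x : ℝ => x ^ p) hL,
    integral_rpow (Or.inl (by linarith)), sub_self, Real.zero_rpow (by linarith), smul_eq_mul]
  ring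

theorem continuous_sub_div_rpow (b L p : ℝ) (hp : 0 < p) :
    Continuous fun t : ℝ => ((b - t) / L) ^ p :=
  ((continuous_const.sub continuous_id).div_const L).rpow_const fun _ => Or.inr hp.le

/-- Effective-medium quantities Δ² = v(τ1)/τ1 and the G-integral for the
backward-looking SABR model with τ0 ≥ 0, where τ = 2qτ0 + τ1. -/
theorem stmt_10 (τ0 τ1 q α ν ρ τ : ℝ)
    (hτ0 : 0 ≤ τ0) (hτ01 : τ0 < τ1) (hq : 0 < q) (hα : 0 < α) (hν : 0 < ν)
    (hρ : ρ ∈ Set.Icc (-1 : ℝ) 1)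
    (hτ : τ = 2 * q * τ0 + τ1)
    (φ v : ℝ → ℝ)
    (hφ1 : ∀ t ∈ Set.Icc (0 : ℝ) τ0, φ t = α)
    (hφ2 : ∀ t ∈ Set.Icc τ0 τ1, φ t = α * ((τ1 - t) / (τ1 - τ0)) ^ q)
    (hv : ∀ u, v u = ∫ s in (0:ℝ)..u, (φ s) ^ 2) :
    v τ1 / τ1 = α ^ 2 * τ / (τ1 * (2 * q + 1))
    ∧ 2 * ν ^ 2 / (v τ1) ^ 2 * (∫ s in (0:ℝ)..τ1, (v τ1 - v s))
        = ν ^ 2 / (v τ1 / τ1) * (τ ^ 2 + 2 * q * τ0 ^ 2 + τ1 ^ 2)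
            / (2 * τ1 * τ * (q + 1))
    ∧ 2 * ν ^ 2 / (v τ1) ^ 2 * (∫ s in (0:ℝ)..τ1, (v τ1 - v s))
        = ν ^ 2 * (2 * q + 1) * (τ ^ 2 + 2 * q * τ0 ^ 2 + τ1 ^ 2)
            / (2 * α ^ 2 * τ ^ 2 * (q + 1)) := by
  have hL : 0 < τ1 - τ0 := sub_pos.2 hτ01
  have hτ1 : 0 < τ1 := hτ0.trans_lt hτ01
  have hτpos : 0 < τ := by rw [hτ]; positivity
  have hsq1 : ∀ t ∈ Set.Icc (0 : ℝ) τ0, α ^ 2 = φ t ^ 2 := fun t ht => by rw [hφ1 t ht]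
  have hsq2 : ∀ t ∈ Set.Icc τ0 τ1,
      α ^ 2 * ((τ1 - t) / (τ1 - τ0)) ^ (2 * q) = φ t ^ 2 := fun t ht => by
    have h0 : 0 ≤ (τ1 - t) / (τ1 - τ0) := div_nonneg (sub_nonneg.2 ht.2) hL.le
    rw [hφ2 t ht, mul_pow, mul_comm 2 q, Real.rpow_mul h0, Real.rpow_two]
  have hcont := (continuous_const (y := α ^ 2)).mul
    (continuous_sub_div_rpow τ1 (τ1 - τ0) (2 * q) (by positivity))
  have hint1 : ∀ s ∈ Set.Icc (0 : ℝ) τ0,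
      IntervalIntegrable (fun t => φ t ^ 2) volume 0 s := fun s hs =>
    (intervalIntegrable_const (c := α ^ 2)).congr_uIcc fun t ht => by
      rw [Set.uIcc_of_le hs.1] at ht
      exact hsq1 t ⟨ht.1, ht.2.trans hs.2⟩
  have hint2 : ∀ a ∈ Set.Icc τ0 τ1, ∀ b ∈ Set.Icc τ0 τ1,
      IntervalIntegrable (fun t => φ t ^ 2) volume a b := fun a ha b hb =>
    (hcont.intervalIntegrable a b).congr_uIcc fun t ht =>
      hsq2 t (Set.uIcc_subset_Icc ha hb ht)
  have hmem0 : τ0 ∈ Set.Icc (0 : ℝ) τ0 := ⟨hτ0, le_rfl⟩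
  have hmem1 : τ0 ∈ Set.Icc τ0 τ1 := ⟨le_rfl, hτ01.le⟩
  have hmem2 : τ1 ∈ Set.Icc τ0 τ1 := ⟨hτ01.le, le_rfl⟩
  have hv1 : ∀ s ∈ Set.Icc (0 : ℝ) τ0, v s = α ^ 2 * s := fun s hs => by
    rw [hv, ← intervalIntegral.integral_congr (f := fun _ => α ^ 2)]
    · simp [mul_comm]
    · intro t ht
      rw [Set.uIcc_of_le hs.1] at ht
      exact hsq1 t ⟨ht.1, ht.2.trans hs.2⟩
  have htail : ∀ s ∈ Set.Icc τ0 τ1, v τ1 - v s =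
      α ^ 2 * ((τ1 - τ0) / (2 * q + 1)) * ((τ1 - s) / (τ1 - τ0)) ^ (2 * q + 1) :=
    fun s hs => by
    have h0 := fun u hu => (hint1 τ0 hmem0).trans (hint2 τ0 hmem1 u hu)
    rw [hv, hv, intervalIntegral.integral_interval_sub_left (h0 τ1 hmem2) (h0 s hs),
      ← intervalIntegral.integral_congr
        (f := fun t => α ^ 2 * ((τ1 - t) / (τ1 - τ0)) ^ (2 * q)),
      intervalIntegral.integral_const_mul,
      integral_sub_div_rpow s τ1 _ _ hL.ne' (by positivity), mul_assoc]
    intro t ht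
    exact hsq2 t (Set.uIcc_subset_Icc hs hmem2 ht)
  have hvτ1 : v τ1 = α ^ 2 * τ / (2 * q + 1) := by
    have h := htail τ0 hmem1
    rw [hv1 τ0 hmem0, div_self hL.ne', Real.one_rpow] at h
    rw [eq_add_of_sub_eq h, hτ]
    field_simp
    ring
  have hcont' := (continuous_const (y := α ^ 2 * ((τ1 - τ0) / (2 * q + 1)))).mul
    (continuous_sub_div_rpow τ1 (τ1 - τ0) (2 * q + 1) (by positivity))
  have hhead : Set.EqOn (fun s => v τ1 - α ^ 2 * s) (fun s => v τ1 - v s)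
      (Set.uIcc 0 τ0) := fun s hs => by
    rw [Set.uIcc_of_le hτ0] at hs
    simp only [hv1 s hs]
  have htail' : Set.EqOn (fun s => α ^ 2 * ((τ1 - τ0) / (2 * q + 1)) *
      ((τ1 - s) / (τ1 - τ0)) ^ (2 * q + 1)) (fun s => v τ1 - v s) (Set.uIcc τ0 τ1) :=
    fun s hs => by
    rw [Set.uIcc_of_le hτ01.le] at hs
    exact (htail s hs).symm
  have hG : ∫ s in (0:ℝ)..τ1, (v τ1 - v s) =
      α ^ 2 * (τ ^ 2 + 2 * q * τ0 ^ 2 + τ1 ^ 2) / (4 * (2 * q + 1) * (q + 1)) := by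
    have hc : Continuous fun s => v τ1 - α ^ 2 * s := by fun_prop
    rw [← intervalIntegral.integral_add_adjacent_intervals
        ((hc.intervalIntegrable 0 τ0).congr_uIcc hhead)
        ((hcont'.intervalIntegrable τ0 τ1).congr_uIcc htail'),
      ← intervalIntegral.integral_congr hhead, ← intervalIntegral.integral_congr htail',
      intervalIntegral.integral_const_mul,
      integral_sub_div_rpow τ0 τ1 _ _ hL.ne' (by positivity), div_self hL.ne', Real.one_rpow,
      intervalIntegral.integral_sub intervalIntegrable_const
        ((by fun_prop : Continuous fun s : ℝ => α ^ 2 * s).intervalIntegrable _ _),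
      intervalIntegral.integral_const_mul, integral_id, intervalIntegral.integral_const,
      smul_eq_mul, hvτ1, hτ, show 2 * q + 1 + 1 = 2 * (q + 1) by ring]
    field_simp
    ring
  rw [hG, hvτ1]
  refine ⟨?_, ?_, ?_⟩ <;> field_simp <;> ring
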